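/- The function f(p) = Γ(p+1)^{1/p}/p is decreasing on the interval [1, ∞): for all 1 ≤ q < p one has Γ(p+1)^{1/p}/p < Γ(q+1)^{1/q}/q (in particular Γ(p+1)^{1/p}/Γ(q+1)^{1/q} ≤ p/q). -/

import Mathlib

/-!
Since `log (Γ(x+1)^{1/x} / x) = h x / x` with `h x = log Γ(x+1) - x log x` and `h 0 = 0`, the
claim says that the secants of `h` from the origin have strictly decreasing slope, so it is enough
that `h` is strictly concave on `[0, ∞)`.

The recursion of `Γ` reads `h x = h (x+1) + k x`, where `k x = x log (1 + 1/x)`, written below as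
`x * log (x + 1) + negMulLog x` to make sense at `0`, is strictly concave: `k'' x = -1/(x (x+1)²)`.
Hence concavity of `h` suffices. That is preserved by pointwise limits, and in the Gauss product
for `Γ` the `n`-th approximant of `h` telescopes to `∑_{m ≤ n} k (x+m) - (x+n+1) log (x+n+1)` plus
an affine function of `x`.
-/

open Filter Real Set Topology
open Real.BohrMollerup (logGammaSeq tendsto_log_gamma)

section Concave

variable {𝕜 E β : Type*} [Semiring 𝕜] [PartialOrder 𝕜] [AddCommMonoid E] [AddCommMonoid β]
  [PartialOrder β]

theorem concaveOn_finset_sum [SMul 𝕜 E] [IsOrderedAddMonoid β] [Module 𝕜 β] {s : Set E}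
    {ι : Type*} {t : Finset ι} {f : ι → E → β} (hs : Convex 𝕜 s)
    (hf : ∀ i ∈ t, ConcaveOn 𝕜 s (f i)) :
    ConcaveOn 𝕜 s fun x ↦ ∑ i ∈ t, f i x := by
  simpa only [Finset.sum_fn] using
    Finset.sum_induction f (ConcaveOn 𝕜 s) (fun _ _ ↦ ConcaveOn.add) (concaveOn_const 0 hs) hf

theorem concaveOn_of_tendsto [SMul 𝕜 E] [SMul 𝕜 β] [TopologicalSpace β] [OrderClosedTopology β]
    [ContinuousAdd β] [ContinuousConstSMul 𝕜 β] {s : Set E} {ι : Type*} {l : Filter ι} [l.NeBot]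
    {F : ι → E → β} {f : E → β} (hs : Convex 𝕜 s) (hF : ∀ i, ConcaveOn 𝕜 s (F i))
    (hlim : ∀ x ∈ s, Tendsto (F · x) l (𝓝 (f x))) : ConcaveOn 𝕜 s f :=
  ⟨hs, fun x hx y hy a b ha hb hab ↦
    le_of_tendsto_of_tendsto' (((hlim x hx).const_smul a).add ((hlim y hy).const_smul b))
      (hlim _ (hs hx hy ha hb hab)) fun i ↦ (hF i).2 hx hy ha hb hab⟩

theorem concaveOn_Ici_comp_add_right [PartialOrder E] [IsOrderedAddMonoid E] [Module 𝕜 E]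
    [PosSMulMono 𝕜 E] [SMul 𝕜 β] {f : E → β} {a c : E} (hf : ConcaveOn 𝕜 (Ici a) f) (hc : 0 ≤ c) :
    ConcaveOn 𝕜 (Ici a) fun x ↦ f (x + c) :=
  (hf.translate_left c).subset (fun _ hx ↦ le_add_of_nonneg_of_le hc hx) (convex_Ici a)

end Concave

theorem hasDerivAt_mul_log_add_one_add_negMulLog {x : ℝ} (hx : x ≠ 0) (hx1 : x + 1 ≠ 0) :
    HasDerivAt (fun x ↦ x * log (x + 1) + negMulLog x) (log (x + 1) - log x - (x + 1)⁻¹) x := by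
  have hlog : HasDerivAt (fun x : ℝ ↦ log (x + 1)) (x + 1)⁻¹ x := by
    simpa using ((hasDerivAt_id x).add_const 1).log hx1
  exact (((hasDerivAt_id' x).fun_mul hlog).fun_add (hasDerivAt_negMulLog hx)).congr_deriv
    (by field)

theorem deriv2_mul_log_add_one_add_negMulLog {x : ℝ} (hx : x ≠ 0) (hx1 : x + 1 ≠ 0) :
    deriv^[2] (fun x ↦ x * log (x + 1) + negMulLog x) x = -(x * (x + 1) ^ 2)⁻¹ := by
  have hadd : HasDerivAt (fun x : ℝ ↦ x + 1) 1 x := (hasDerivAt_id x).add_const 1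
  have hderiv : deriv (fun x ↦ x * log (x + 1) + negMulLog x) =ᶠ[𝓝 x]
      fun x ↦ log (x + 1) - log x - (x + 1)⁻¹ := by
    filter_upwards [eventually_ne_nhds hx, hadd.continuousAt.eventually_ne hx1] with y hy hy1
    exact (hasDerivAt_mul_log_add_one_add_negMulLog hy hy1).deriv
  have hderiv2 : HasDerivAt (fun x ↦ log (x + 1) - log x - (x + 1)⁻¹) (-(x * (x + 1) ^ 2)⁻¹) x :=
    (((hadd.log hx1).fun_sub (hasDerivAt_log hx)).fun_sub (hadd.fun_inv hx1)).congr_deriv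
      (by field)
  rw [Function.iterate_succ_apply, Function.iterate_one, hderiv.deriv_eq, hderiv2.deriv]

theorem strictConcaveOn_mul_log_add_one_add_negMulLog :
    StrictConcaveOn ℝ (Ici 0) fun x ↦ x * log (x + 1) + negMulLog x := by
  refine strictConcaveOn_of_deriv2_neg (convex_Ici 0) ?_ fun x hx ↦ ?_
  · have hlog : ContinuousOn (fun x : ℝ ↦ log (x + 1)) (Ici 0) :=
      ContinuousOn.log (by fun_prop) fun x (hx : 0 ≤ x) ↦ by positivity
    fun_prop
  · rw [interior_Ici, mem_Ioi] at hx
    rw [deriv2_mul_log_add_one_add_negMulLog hx.ne' (by positivity), neg_lt_zero]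
    positivity

theorem sum_range_mul_log_add_one_add_negMulLog (x : ℝ) (n : ℕ) :
    ∑ m ∈ Finset.range n, ((x + m) * log (x + m + 1) + negMulLog (x + m)) =
      negMulLog x - negMulLog (x + n) - ∑ m ∈ Finset.range n, log (x + 1 + m) := by
  have hterm (m : ℕ) : (x + m) * log (x + m + 1) + negMulLog (x + m) =
      negMulLog (x + m) - negMulLog (x + (m + 1 : ℕ)) - log (x + 1 + m) := by
    rw [Nat.cast_succ, ← add_assoc, add_right_comm x 1, negMulLog_def]
    ring
  simp only [hterm, Finset.sum_sub_distrib,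
    Finset.sum_range_sub' fun m : ℕ ↦ negMulLog (x + m), Nat.cast_zero, add_zero]

theorem concaveOn_logGammaSeq_add_one_add_negMulLog (n : ℕ) :
    ConcaveOn ℝ (Ici 0) fun x ↦ logGammaSeq (x + 1) n + negMulLog x := by
  have hsum : ConcaveOn ℝ (Ici 0) fun x : ℝ ↦
      ∑ m ∈ Finset.range (n + 1), ((x + m) * log (x + m + 1) + negMulLog (x + m)) :=
    concaveOn_finset_sum (convex_Ici 0) fun m _ ↦ concaveOn_Ici_comp_add_right
      strictConcaveOn_mul_log_add_one_add_negMulLog.concaveOn m.cast_nonneg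
  have hlast : ConcaveOn ℝ (Ici 0) fun x : ℝ ↦ negMulLog (x + (n + 1 : ℕ)) :=
    concaveOn_Ici_comp_add_right concaveOn_negMulLog (n + 1).cast_nonneg
  have haffine : ConcaveOn ℝ (Ici 0) fun x : ℝ ↦ x * log n + (log n + log n.factorial) :=
    ((LinearMap.mulRight ℝ (log n)).concaveOn (convex_Ici 0)).add_const _
  refine ((hsum.add hlast).add haffine).congr fun x _ ↦ ?_
  simp only [Pi.add_apply, sum_range_mul_log_add_one_add_negMulLog, logGammaSeq]
  ring

theorem concaveOn_log_Gamma_add_one_add_negMulLog :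
    ConcaveOn ℝ (Ici 0) fun x ↦ log (Gamma (x + 1)) + negMulLog x :=
  concaveOn_of_tendsto (convex_Ici 0) concaveOn_logGammaSeq_add_one_add_negMulLog
    fun x hx ↦ (tendsto_log_gamma (add_pos_of_nonneg_of_pos hx one_pos)).add_const (negMulLog x)

theorem log_Gamma_add_one {x : ℝ} (hx : 0 < x) :
    log (Gamma (x + 1)) = log x + log (Gamma x) := by
  rw [Gamma_add_one hx.ne', log_mul hx.ne' (Gamma_pos_of_pos hx).ne']

theorem strictConcaveOn_log_Gamma_add_one_add_negMulLog :
    StrictConcaveOn ℝ (Ici 0) fun x ↦ log (Gamma (x + 1)) + negMulLog x := by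
  have hshift := concaveOn_Ici_comp_add_right concaveOn_log_Gamma_add_one_add_negMulLog zero_le_one
  refine (strictConcaveOn_mul_log_add_one_add_negMulLog.add_concaveOn hshift).congr fun x hx ↦ ?_
  simp only [Pi.add_apply, log_Gamma_add_one (add_pos_of_nonneg_of_pos hx one_pos), negMulLog_def]
  ring

theorem log_Gamma_add_one_rpow_div {x : ℝ} (hx : 0 < x) :
    log (Gamma (x + 1) ^ (1 / x) / x) = (log (Gamma (x + 1)) + negMulLog x) / x := by
  have hΓ : 0 < Gamma (x + 1) := Gamma_pos_of_pos (by positivity)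
  rw [log_div (rpow_pos_of_pos hΓ _).ne' hx.ne', log_rpow hΓ, negMulLog_def]
  field

theorem gamma_rpow_div_strictAnti_general :
    StrictAntiOn (fun x ↦ Gamma (x + 1) ^ (1 / x) / x) (Ioi 0) := by
  have hpos {x : ℝ} (hx : 0 < x) : 0 < Gamma (x + 1) ^ (1 / x) / x :=
    div_pos (rpow_pos_of_pos (Gamma_pos_of_pos (by positivity)) _) hx
  intro q (hq : 0 < q) p (hp : 0 < p) hqp
  rw [← log_lt_log_iff (hpos hp) (hpos hq), log_Gamma_add_one_rpow_div hp,
    log_Gamma_add_one_rpow_div hq]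
  simpa using strictConcaveOn_log_Gamma_add_one_add_negMulLog.secant_strict_mono
    self_mem_Ici hq.le hp.le hq.ne' hp.ne' hqp

/-- The function `f(p) = Γ(p+1)^{1/p} / p` is (strictly) decreasing on `[1, ∞)`:
for `1 ≤ q < p` one has `Γ(p+1)^{1/p}/p < Γ(q+1)^{1/q}/q`. -/
theorem gamma_rpow_div_strictAnti (p q : ℝ) (hq : 1 ≤ q) (hpq : q < p) :
    Real.Gamma (p + 1) ^ (1 / p) / p < Real.Gamma (q + 1) ^ (1 / q) / q :=
  have hq₀ : 0 < q := one_pos.trans_le hq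
  gamma_rpow_div_strictAnti_general hq₀ (hq₀.trans hpq) hpq
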